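/- Let n, m1, m2, s1, s2 be positive integers with s1 ≤ m1, s2 ≤ m2 and n > 2(s1 + s2). Then for Lebesgue-almost all pairs (D, E) ∈ ℂ^{n×m1} × ℂ^{n×m2}, the following holds: for every x0 ∈ ℂ^{m1} with x0 ≠ 0 and ‖x0‖₀ ≤ s1, every y0 ∈ ℂ^{m2} with y0 ≠ 0 and ‖y0‖₀ ≤ s2, and every pair (x, y) ∈ ℂ^{m1} × ℂ^{m2} with ‖x‖₀ ≤ s1, ‖y‖₀ ≤ s2 and (D x) ⊛ (E y) = (D x0) ⊛ (E y0), there exists a nonzero σ ∈ ℂ with x = σ x0 and y = σ⁻¹ y0. (Strong identifiability of blind deconvolution with sparsity constraints.) -/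

import Mathlib

/-!
The discrete Fourier transform turns the convolution equation into the `n` scalar equations
`A_k ⬝ Z B_k = 0`, where `A_k`, `B_k` are the rows of the transforms of `D`, `E` (again generic,
since the transform is a linear isomorphism) and `Z = x yᵀ - x₀ y₀ᵀ`. If `Z = 0`, then `(x, y)` is a
rescaling of `(x₀, y₀)`. So it suffices that for almost all `(A, B)` no `Z ≠ 0` of this form
satisfies all `n` equations.

For fixed supports, `Z` depends on at most `2 (s1 + s2) < n` complex parameters. Fix `i`, `j` with
`Z i j ≠ 0`. In every row `k`, either the `i`-th entry of `Z B_k` is nonzero, and the equation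
determines `A_k i` from the parameters and the other entries of `(A_k, B_k)`; or that entry is zero,
and its vanishing determines `B_k j` from the parameters and the other entries of `B_k`. Either way each row loses one degree of
freedom, so the bad pairs `(A, B)` form a finite union of differentiable images of spaces of
dimension smaller than that of the ambient space (`ae_measurements_injective`), and these are null
sets (`null_of_solvable`, `null_image_of_finrank_lt`).
-/

open MeasureTheory Filter

/-- Circular convolution of two vectors in `ℂ^n` indexed by `ZMod n`. -/
noncomputable def cconv {n : ℕ} [NeZero n] (u v : ZMod n → ℂ) : ZMod n → ℂ :=
  fun k => ∑ j : ZMod n, u j * v (k - j)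

/-- Matrix-vector multiplication `D x` for `D ∈ ℂ^{n×m}`. -/
noncomputable def mApply {n m : ℕ} [NeZero n] (D : ZMod n → Fin m → ℂ) (x : Fin m → ℂ) :
    ZMod n → ℂ :=
  fun k => ∑ i, D k i * x i

/-- `‖x‖₀`, the number of nonzero entries of a vector. -/
noncomputable def l0 {m : ℕ} (x : Fin m → ℂ) : ℕ := (Function.support x).ncard

/-! ### Null sets from parameter counts -/

/-- A differentiable image of a space of smaller complex dimension is Lebesgue-null: composing
with a linear surjection `E → F` gives a self-map of `E` with singular derivative, to which the
easy part of Sard's theorem applies. -/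
theorem null_image_of_finrank_lt {F E : Type*} [NormedAddCommGroup F] [NormedSpace ℂ F]
    [FiniteDimensional ℂ F] [NormedAddCommGroup E] [NormedSpace ℂ E] [FiniteDimensional ℂ E]
    [MeasurableSpace E] [BorelSpace E] (μ : Measure E) [μ.IsAddHaarMeasure]
    (h : Module.finrank ℂ F < Module.finrank ℂ E) (f : F → E) (s : Set F)
    (hf : DifferentiableOn ℂ f s) : μ (f '' s) = 0 := by
  obtain ⟨ι, hι⟩ := finrank_le_iff_exists_linearMap.1 h.le
  obtain ⟨L₀, hL₀⟩ := ι.exists_leftInverse_of_injective (LinearMap.ker_eq_bot.2 hι)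
  let L : E →L[ℂ] F := LinearMap.toContinuousLinearMap L₀
  have hL : ∀ x, L (ι x) = x := fun x => LinearMap.congr_fun hL₀ x
  have hsub : f '' s ⊆ (f ∘ L) '' (L ⁻¹' s) := by
    rintro _ ⟨x, hx, rfl⟩
    exact ⟨ι x, by simpa [hL] using hx, by simp [hL]⟩
  have : FiniteDimensional ℝ E := FiniteDimensional.complexToReal E
  refine measure_mono_null hsub ?_
  refine addHaar_image_eq_zero_of_det_fderivWithin_eq_zero μ
    (f' := fun x => ((fderivWithin ℂ f s (L x)).comp L).restrictScalars ℝ) (fun x hx => ?_)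
    (fun x hx => ?_)
  · have h1 := (hf (L x) hx).hasFDerivWithinAt
    exact (h1.comp x L.hasFDerivAt.hasFDerivWithinAt (Set.mapsTo_preimage L s)).restrictScalars ℝ
  · -- `L` is not injective for dimension reasons, hence neither is the derivative of `f ∘ L`.
    obtain ⟨w, hw0, hw⟩ : ∃ w, w ≠ 0 ∧ L w = 0 := by
      by_contra! hcon
      have : Function.Injective L₀ := by
        rw [← LinearMap.ker_eq_bot, LinearMap.ker_eq_bot']
        intro m hm
        by_contra hm0
        exact hcon m hm0 hm
      exact absurd (LinearMap.finrank_le_finrank_of_injective this) (by omega)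
    refine LinearMap.det_eq_zero_iff_ker_ne_bot.2 fun hbot => hw0 ?_
    refine LinearMap.ker_eq_bot'.1 hbot w ?_
    change (fderivWithin ℂ f s (L x)) (L w) = 0
    rw [hw, map_zero]

/-- Parameter count. Let `π : E → ℂ^κ` be linear with linear section `e`, so that
`v = v₀ + e (π v)` with `v₀ = v - e (π v) ∈ ker π`. If for each bad `v` there is a parameter `q`
such that every coordinate `π v k` is determined by an equation `φ k + π v k * d k = 0`, `d k ≠ 0`,
whose coefficients are differentiable functions of `q` and `v₀` alone, then the bad `v` are
parametrized by `P × ker π`, and they form a null set as soon as `dim P < #κ`. -/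
theorem null_of_solvable {P E κ : Type*} [Fintype κ] [NormedAddCommGroup P] [NormedSpace ℂ P]
    [FiniteDimensional ℂ P] [NormedAddCommGroup E] [NormedSpace ℂ E] [FiniteDimensional ℂ E]
    [MeasurableSpace E] [BorelSpace E] (μ : Measure E) [μ.IsAddHaarMeasure]
    (hP : Module.finrank ℂ P < Fintype.card κ)
    (π : E →ₗ[ℂ] (κ → ℂ)) (e : (κ → ℂ) →ₗ[ℂ] E) (hπe : ∀ t, π (e t) = t)
    (φ d : κ → P × E → ℂ) (hφ : ∀ k, Differentiable ℂ (φ k)) (hd : ∀ k, Differentiable ℂ (d k)) :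
    μ {v | ∃ q : P, ∀ k, d k (q, v - e (π v)) ≠ 0 ∧
      φ k (q, v - e (π v)) + π v k * d k (q, v - e (π v)) = 0} = 0 := by
  let K := LinearMap.ker π
  have hfin : Module.finrank ℂ (P × K) < Module.finrank ℂ E := by
    have h1 := π.finrank_range_add_finrank_ker
    have h2 : LinearMap.range π = ⊤ := LinearMap.range_eq_top.2 fun t => ⟨e t, hπe t⟩
    rw [h2, finrank_top, Module.finrank_pi] at h1
    rw [Module.finrank_prod]
    change _ + Module.finrank ℂ (LinearMap.ker π) < _
    omega
  let i : P × K →L[ℂ] P × E := (ContinuousLinearMap.id ℂ P).prodMap K.subtypeL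
  let s : Set (P × K) := {p | ∀ k, d k (i p) ≠ 0}
  let f : P × K → E := fun p => (p.2 : E) + e.toContinuousLinearMap
    (fun k => -φ k (i p) / d k (i p))
  have hf : DifferentiableOn ℂ f s := by
    have hi : Differentiable ℂ i := i.differentiable
    have h1 : Differentiable ℂ fun p : P × K => (p.2 : E) :=
      (K.subtypeL.comp (ContinuousLinearMap.snd ℂ P K)).differentiable
    refine h1.differentiableOn.add ?_
    refine (e.toContinuousLinearMap.differentiable).comp_differentiableOn ?_
    refine differentiableOn_pi.2 fun k => ?_
    intro p hp
    have h2 : DifferentiableAt ℂ (fun p => -φ k (i p)) p := ((hφ k).comp hi).neg p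
    have h3 : DifferentiableAt ℂ (fun p => d k (i p)) p := ((hd k).comp hi) p
    simp only [div_eq_mul_inv]
    exact (h2.mul (h3.inv (hp k))).differentiableWithinAt
  refine measure_mono_null ?_ (null_image_of_finrank_lt μ hfin f s hf)
  rintro v ⟨q, hq⟩
  have hker : v - e (π v) ∈ K := by
    rw [LinearMap.mem_ker, map_sub, hπe, sub_self]
  refine ⟨(q, ⟨v - e (π v), hker⟩), fun k => (hq k).1, ?_⟩
  have hsol : (fun k => -φ k (q, v - e (π v)) / d k (q, v - e (π v))) = π v := by
    funext k
    rw [div_eq_iff (hq k).1]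
    linear_combination -(hq k).2
  change v - e (π v) + e (fun k => -φ k (q, v - e (π v)) / d k (q, v - e (π v))) = v
  rw [hsol, sub_add_cancel]

/-! ### Bilinear measurements of a family of matrices -/

section Rows

variable {κ α β : Type*} [DecidableEq α] [DecidableEq β]

/-- The coordinates of `(A, B)` to be solved for, one in each row `k`: the entry `A k i` when
`c k = some i`, and the entry `B k j` when `c k = none`. -/
def solvedCoords (c : κ → Option α) (j : β) : (κ → α → ℂ) × (κ → β → ℂ) →ₗ[ℂ] (κ → ℂ) where
  toFun v k := match c k with
    | some i => v.1 k i
    | none => v.2 k j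
  map_add' v w := by
    funext k
    cases h : c k <;> simp [h]
  map_smul' r v := by
    funext k
    cases h : c k <;> simp [h]

/-- The section of `solvedCoords` that fills all other entries with zeros. -/
def insertCoords (c : κ → Option α) (j : β) : (κ → ℂ) →ₗ[ℂ] (κ → α → ℂ) × (κ → β → ℂ) where
  toFun t := (fun k i => if c k = some i then t k else 0,
    fun k j' => if c k = none ∧ j' = j then t k else 0)
  map_add' t u := by
    ext k l
    · by_cases h : c k = some l <;> simp [h]
    · by_cases h : c k = none ∧ l = j <;> simp [h]
  map_smul' r t := by
    ext k l
    · by_cases h : c k = some l <;> simp [h]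
    · by_cases h : c k = none ∧ l = j <;> simp [h]

theorem solvedCoords_insertCoords (c : κ → Option α) (j : β) (t : κ → ℂ) :
    solvedCoords c j (insertCoords c j t) = t := by
  funext k
  cases h : c k <;> simp [h, solvedCoords, insertCoords]

end Rows

theorem isAddHaarMeasure_volume_rows (κ α β : Type*) [Fintype κ] [Fintype α] [Fintype β] :
    (volume : Measure ((κ → α → ℂ) × (κ → β → ℂ))).IsAddHaarMeasure := by
  have : (volume : Measure (κ → α → ℂ)).IsAddHaarMeasure := Measure.pi.isAddHaarMeasure _
  have : (volume : Measure (κ → β → ℂ)).IsAddHaarMeasure := Measure.pi.isAddHaarMeasure _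
  exact Measure.prod.instIsAddHaarMeasure volume volume

/-- For almost all `(A, B)`, the `κ` bilinear measurements `A k ⬝ Z (B k)` annihilate no nonzero
member of a differentiable family of matrices `Z` with fewer than `#κ` parameters. -/
theorem ae_measurements_injective {P κ α β : Type*} [Fintype κ] [Fintype α] [Fintype β]
    [NormedAddCommGroup P] [NormedSpace ℂ P] [FiniteDimensional ℂ P]
    (hP : Module.finrank ℂ P < Fintype.card κ)
    (Z : P → α → β → ℂ) (hZ : ∀ r t, Differentiable ℂ fun q => Z q r t) :
    ∀ᵐ v : (κ → α → ℂ) × (κ → β → ℂ), ∀ q,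
      (∀ k, ∑ r, v.1 k r * ∑ t, Z q r t * v.2 k t = 0) → ∀ i j, Z q i j = 0 := by
  classical
  -- Given `Z i j ≠ 0`: if the `i`-th entry of `Z (B k)` is nonzero, the equation of row `k` is
  -- solved for `A k i`; if it vanishes, its vanishing is solved for `B k j`.
  -- Each way, one coordinate per row is lost.
  let φ : (κ → Option α) → α → κ → P × ((κ → α → ℂ) × (κ → β → ℂ)) → ℂ := fun c i k p =>
    match c k with
    | some _ => ∑ r, p.2.1 k r * ∑ t, Z p.1 r t * p.2.2 k t
    | none => ∑ t, Z p.1 i t * p.2.2 k t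
  let d : (κ → Option α) → α → β → κ → P × ((κ → α → ℂ) × (κ → β → ℂ)) → ℂ := fun c i j k p =>
    match c k with
    | some i' => ∑ t, Z p.1 i' t * p.2.2 k t
    | none => Z p.1 i j
  have hZ' : ∀ r t, Differentiable ℂ
      fun p : P × ((κ → α → ℂ) × (κ → β → ℂ)) => Z p.1 r t :=
    fun r t => (hZ r t).comp differentiable_fst
  have key : ∀ (c : κ → Option α) (i : α) (j : β),
      ∀ᵐ v : (κ → α → ℂ) × (κ → β → ℂ), ¬ ∃ q : P, ∀ k,
        d c i j k (q, v - insertCoords c j (solvedCoords c j v)) ≠ 0 ∧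
        φ c i k (q, v - insertCoords c j (solvedCoords c j v)) + solvedCoords c j v k *
          d c i j k (q, v - insertCoords c j (solvedCoords c j v)) = 0 := by
    intro c i j
    rw [ae_iff]
    simp only [not_not]
    have := isAddHaarMeasure_volume_rows κ α β
    refine null_of_solvable volume hP _ _ (solvedCoords_insertCoords c j) _ _ ?_ ?_
    · intro k
      cases h : c k <;> simp only [φ, h] <;> fun_prop
    · intro k
      cases h : c k <;> simp only [d, h] <;> fun_prop
  filter_upwards [ae_all_iff.2 fun c => ae_all_iff.2 fun i => ae_all_iff.2 fun j => key c i j]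
    with v hv q hq i j
  by_contra hij
  have hc : ∀ k, ∃ o : Option α, match o with
      | some i' => ∑ t, Z q i' t * v.2 k t ≠ 0
      | none => ∑ t, Z q i t * v.2 k t = 0 := by
    intro k
    by_cases h : ∑ t, Z q i t * v.2 k t = 0
    · exact ⟨none, h⟩
    · exact ⟨some i, h⟩
  choose c hc using hc
  refine hv c i j ⟨q, fun k => ?_⟩
  have hck := hc k
  cases h : c k with
  | none =>
    rw [h] at hck
    simp only at hck
    simp only [φ, d, h]
    refine ⟨hij, ?_⟩
    have : ∀ t, Z q i t * (v - insertCoords c j (solvedCoords c j v)).2 k t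
        = Z q i t * v.2 k t - if t = j then Z q i j * v.2 k j else 0 := by
      intro t
      by_cases ht : t = j
      · subst ht; simp [insertCoords, solvedCoords, h]
      · simp [insertCoords, h, ht]
    simp only [this, Finset.sum_sub_distrib, hck]
    simp [solvedCoords, h, mul_comm]
  | some i' =>
    rw [h] at hck
    simp only at hck
    have hB : ∀ t, (v - insertCoords c j (solvedCoords c j v)).2 k t = v.2 k t := by
      intro t
      simp [insertCoords, h]
    simp only [φ, d, h, hB]
    refine ⟨hck, ?_⟩
    have hA : ∀ r, (v - insertCoords c j (solvedCoords c j v)).1 k r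
        * (∑ t, Z q r t * v.2 k t) = v.1 k r * (∑ t, Z q r t * v.2 k t)
          - if r = i' then v.1 k i' * (∑ t, Z q i' t * v.2 k t) else 0 := by
      intro r
      by_cases hr : r = i'
      · subst hr; simp [insertCoords, solvedCoords, h]
      · simp [insertCoords, h, hr, Ne.symm hr]
    simp only [hA, Finset.sum_sub_distrib, hq k]
    simp [solvedCoords, h]

/-! ### Discrete Fourier transform -/

/-- The discrete Fourier transform turns circular convolution into a pointwise product. -/
theorem dft_cconv {n : ℕ} [NeZero n] (u v : ZMod n → ℂ) (k : ZMod n) :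
    ZMod.dft (cconv u v) k = ZMod.dft u k * ZMod.dft v k := by
  simp only [ZMod.dft_apply, cconv, smul_eq_mul, Finset.mul_sum, Finset.sum_mul]
  rw [Finset.sum_comm]
  conv_rhs => rw [Finset.sum_comm]
  refine Finset.sum_congr rfl fun j _ => ?_
  rw [← Equiv.sum_comp (Equiv.addRight j)]
  refine Finset.sum_congr rfl fun l _ => ?_
  simp only [Equiv.coe_addRight, add_sub_cancel_right]
  rw [show -((l + j) * k) = -(j * k) + -(l * k) by ring, AddChar.map_add_eq_mul]
  ring

theorem dft_mApply {n m : ℕ} [NeZero n] (D : ZMod n → Fin m → ℂ) (x : Fin m → ℂ) (k : ZMod n) :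
    ZMod.dft (mApply D x) k = ∑ i, ZMod.dft D k i * x i := by
  simp only [ZMod.dft_apply, mApply, smul_eq_mul, Finset.mul_sum, Finset.sum_apply, Pi.smul_apply,
    Finset.sum_mul]
  rw [Finset.sum_comm]
  simp only [mul_assoc]

/-- A property valid for almost all `(D, E)` is valid for almost all pairs of column-wise discrete
Fourier transforms. -/
theorem ae_dft {n m1 m2 : ℕ} [NeZero n] {p : (ZMod n → Fin m1 → ℂ) × (ZMod n → Fin m2 → ℂ) → Prop}
    (h : ∀ᵐ v, p v) : ∀ᵐ v : (ZMod n → Fin m1 → ℂ) × (ZMod n → Fin m2 → ℂ),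
      p (ZMod.dft v.1, ZMod.dft v.2) := by
  let Φ : ((ZMod n → Fin m1 → ℂ) × (ZMod n → Fin m2 → ℂ)) ≃ₗ[ℝ]
      ((ZMod n → Fin m1 → ℂ) × (ZMod n → Fin m2 → ℂ)) :=
    (LinearEquiv.prodCongr ZMod.dft ZMod.dft).restrictScalars ℝ
  rw [ae_iff] at h ⊢
  have := isAddHaarMeasure_volume_rows (ZMod n) (Fin m1) (Fin m2)
  have := Measure.addHaar_preimage_linearEquiv volume Φ {v | ¬ p v}
  rw [h, mul_zero] at this
  exact this

/-! ### Sparse vectors and rank-one matrices -/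

/-- Extension by zero of vectors supported in `J`. -/
noncomputable def extendZero {m : ℕ} (J : Finset (Fin m)) : (J → ℂ) →L[ℂ] (Fin m → ℂ) :=
  (Function.ExtendByZero.linearMap ℂ (Subtype.val : J → Fin m)).toContinuousLinearMap

theorem extendZero_apply {m : ℕ} (J : Finset (Fin m)) (w : J → ℂ) (i : Fin m) :
    extendZero J w i = Function.extend Subtype.val w 0 i := rfl

theorem exists_extendZero_of_l0_le {m s : ℕ} {x : Fin m → ℂ} (h : l0 x ≤ s) :
    ∃ J : Finset (Fin m), J.card ≤ s ∧ ∃ w, extendZero J w = x := by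
  classical
  refine ⟨(Set.toFinite (Function.support x)).toFinset, ?_, fun i => x i, ?_⟩
  · rwa [← Set.ncard_eq_toFinset_card]
  · funext i
    rw [extendZero_apply]
    by_cases hi : x i = 0
    · rw [Function.extend_apply']
      · exact hi.symm
      · rintro ⟨⟨a, ha⟩, rfl⟩
        exact (Set.Finite.mem_toFinset _).1 ha hi
    · exact Subtype.val_injective.extend_apply _ _
        (⟨i, by simpa using hi⟩ : {a // a ∈ (Set.toFinite (Function.support x)).toFinset})

/-- Equal rank-one matrices `x yᵀ = x₀ y₀ᵀ ≠ 0` have factors equal up to scaling. -/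
theorem exists_scale_of_outer_eq {α β : Type*} {x x0 : α → ℂ} {y y0 : β → ℂ} (hx0 : x0 ≠ 0)
    (hy0 : y0 ≠ 0) (h : ∀ i j, x i * y j = x0 i * y0 j) :
    ∃ σ : ℂ, σ ≠ 0 ∧ x = σ • x0 ∧ y = σ⁻¹ • y0 := by
  obtain ⟨i, hi⟩ := Function.ne_iff.1 hx0
  obtain ⟨j, hj⟩ := Function.ne_iff.1 hy0
  simp only [Pi.zero_apply] at hi hj
  have hij : x i * y j ≠ 0 := by rw [h]; exact mul_ne_zero hi hj
  have hxi := left_ne_zero_of_mul hij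
  have hyj := right_ne_zero_of_mul hij
  refine ⟨x i / x0 i, div_ne_zero hxi hi, ?_, ?_⟩
  · funext a
    have h1 := h i j
    have h2 := h a j
    simp only [Pi.smul_apply, smul_eq_mul]
    rw [div_mul_eq_mul_div, eq_div_iff hi]
    refine mul_right_cancel₀ hyj ?_
    linear_combination x0 i * h2 - x0 a * h1
  · funext b
    have h1 := h i b
    simp only [Pi.smul_apply, smul_eq_mul]
    rw [inv_div, div_mul_eq_mul_div, eq_div_iff hxi]
    linear_combination h1

/-- Strong identifiability of blind deconvolution with sparsity constraints:
if `n > 2(s1 + s2)`, then for Lebesgue-almost all `(D, E)`, all nonzero sparse pairs `(x0, y0)`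
are identifiable up to scaling among sparse pairs. -/
theorem strong_identifiability_sparse (n m1 m2 s1 s2 : ℕ) [NeZero n]
    (hm1 : 0 < m1) (hm2 : 0 < m2) (hs1 : 0 < s1) (hs2 : 0 < s2)
    (hs1m : s1 ≤ m1) (hs2m : s2 ≤ m2) (hn : 2 * (s1 + s2) < n) :
    ∀ᵐ DE : (ZMod n → Fin m1 → ℂ) × (ZMod n → Fin m2 → ℂ),
      ∀ x0 : Fin m1 → ℂ, x0 ≠ 0 → l0 x0 ≤ s1 →
      ∀ y0 : Fin m2 → ℂ, y0 ≠ 0 → l0 y0 ≤ s2 →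
      ∀ x : Fin m1 → ℂ, ∀ y : Fin m2 → ℂ, l0 x ≤ s1 → l0 y ≤ s2 →
        cconv (mApply DE.1 x) (mApply DE.2 y) = cconv (mApply DE.1 x0) (mApply DE.2 y0) →
        ∃ σ : ℂ, σ ≠ 0 ∧ x = σ • x0 ∧ y = σ⁻¹ • y0 := by
  classical
  have key : ∀ (J J0 : Finset (Fin m1)) (K K0 : Finset (Fin m2)), J.card ≤ s1 → J0.card ≤ s1 →
      K.card ≤ s2 → K0.card ≤ s2 →
      ∀ᵐ v : (ZMod n → Fin m1 → ℂ) × (ZMod n → Fin m2 → ℂ),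
        ∀ q : ((J → ℂ) × (J0 → ℂ)) × ((K → ℂ) × (K0 → ℂ)),
          (∀ k, ∑ r, v.1 k r * ∑ t, (extendZero J q.1.1 r * extendZero K q.2.1 t
            - extendZero J0 q.1.2 r * extendZero K0 q.2.2 t) * v.2 k t = 0) →
          ∀ i j, extendZero J q.1.1 i * extendZero K q.2.1 j
            - extendZero J0 q.1.2 i * extendZero K0 q.2.2 j = 0 := by
    intro J J0 K K0 hJ hJ0 hK hK0
    refine ae_measurements_injective (P := ((J → ℂ) × (J0 → ℂ)) × ((K → ℂ) × (K0 → ℂ))) ?_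
      (fun q r t => extendZero J q.1.1 r * extendZero K q.2.1 t
            - extendZero J0 q.1.2 r * extendZero K0 q.2.2 t) ?_
    · simp only [Module.finrank_prod, Module.finrank_pi, Fintype.card_coe, ZMod.card]
      omega
    · intro r t
      fun_prop
  have hall := ae_all_iff.2 fun J => ae_all_iff.2 fun J0 => ae_all_iff.2 fun K =>
    ae_all_iff.2 fun K0 => ae_all_iff.2 fun hJ => ae_all_iff.2 fun hJ0 => ae_all_iff.2 fun hK =>
    ae_all_iff.2 fun hK0 => key J J0 K K0 hJ hJ0 hK hK0
  filter_upwards [ae_dft hall] with DE hDE x0 hx0 hx0s y0 hy0 hy0s x y hxs hys hconv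
  obtain ⟨J, hJ, w, rfl⟩ := exists_extendZero_of_l0_le hxs
  obtain ⟨J0, hJ0, w0, rfl⟩ := exists_extendZero_of_l0_le hx0s
  obtain ⟨K, hK, z, rfl⟩ := exists_extendZero_of_l0_le hys
  obtain ⟨K0, hK0, z0, rfl⟩ := exists_extendZero_of_l0_le hy0s
  refine exists_scale_of_outer_eq hx0 hy0 fun i j => sub_eq_zero.1 ?_
  refine hDE J J0 K K0 hJ hJ0 hK hK0 ((w, w0), (z, z0)) (fun k => ?_) i j
  have h := congrArg (fun u => ZMod.dft u k) hconv
  simp only [dft_cconv, dft_mApply, Finset.sum_mul_sum] at h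
  rw [← sub_eq_zero, ← Finset.sum_sub_distrib] at h
  rw [← h]
  refine Finset.sum_congr rfl fun r _ => ?_
  rw [Finset.mul_sum, ← Finset.sum_sub_distrib]
  refine Finset.sum_congr rfl fun t _ => ?_
  ring
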